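/- Let f : I ⊆ ℝ → ℝ be a differentiable mapping on the interior I° of I, a, b ∈ I° with a < b, f′ ∈ L₂[a,b], and suppose f′ is bounded on (a,b) with φ ≤ f′(x) ≤ Φ. Then |f((a+b)/2) − (1/(b−a)) ∫_a^b f(t) dt| ≤ ((b−a)/(2√3)) ( (1/(b−a)) ‖f′‖₂² − ((f(b)−f(a))/(b−a))² )^{1/2} ≤ (b−a)(Φ − φ)/(4√3). -/

import Mathlib

open MeasureTheory Set intervalIntegral

/-!
Let `U` be uniformly distributed on `(a, b)` and let `K` be the kernel `t - a` for `t ≤ x`, `t - b`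
for `t > x`. Integration by parts gives `𝔼[K(U) f'(U)] = f x - 𝔼[f(U)]`, so that

  `cov[K(U), f'(U)] = f x - (x - (a + b) / 2) * (f b - f a) / (b - a) - 𝔼[f(U)]`,

whose middle term vanishes at the midpoint. Since `K` merely exchanges the two pieces of the
interval, `K(U)` is uniform on an interval of length `b - a`, and `Var[K(U)] = (b - a)² / 12`
whatever `x` is. The Cauchy–Schwarz inequality bounds the covariance, and Popoviciu's inequality
`Var[f'(U)] ≤ ((Φ - φ) / 2)²` gives the last bound.
-/

section Ostrowski

open ProbabilityTheory

theorem sq_covariance_le_variance_mul_variance {Ω : Type*} {mΩ : MeasurableSpace Ω}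
    {μ : Measure Ω} [IsFiniteMeasure μ] {X Y : Ω → ℝ} (hX : MemLp X 2 μ) (hY : MemLp Y 2 μ) :
    cov[X, Y; μ] ^ 2 ≤ Var[X; μ] * Var[Y; μ] := by
  have variance_nonneg_of_line (r : ℝ) :
      0 ≤ Var[X; μ] * (r * r) + 2 * cov[X, Y; μ] * r + Var[Y; μ] :=
    calc 0 ≤ Var[fun ω ↦ r * X ω + Y ω; μ] := variance_nonneg _ _
      _ = _ := by
        rw [variance_fun_add (hX.const_mul r) hY, variance_const_mul, covariance_const_mul_left]
        ring
  have discrim_nonpos := discrim_le_zero variance_nonneg_of_line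
  rw [discrim] at discrim_nonpos
  linarith

variable {E : Type*} [NormedAddCommGroup E] {a b x : ℝ}

theorem isProbabilityMeasure_cond_Ioo (hab : a < b) :
    IsProbabilityMeasure (volume[|Ioo a b]) :=
  cond_isProbabilityMeasure_of_finite (by simp [hab]) (by simp)

theorem integrable_cond_Ioo_iff (hab : a < b) {g : ℝ → E} :
    Integrable g (volume[|Ioo a b]) ↔ IntervalIntegrable g volume a b := by
  rw [intervalIntegrable_iff_integrableOn_Ioo_of_le hab.le, IntegrableOn,
    ProbabilityTheory.cond, integrable_smul_measure (by simp) (by simp [hab])]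

variable [NormedSpace ℝ E]

theorem integral_cond_Ioo (hab : a ≤ b) (g : ℝ → E) :
    ∫ t, g t ∂volume[|Ioo a b] = (b - a)⁻¹ • ∫ t in a..b, g t := by
  rw [ProbabilityTheory.cond, MeasureTheory.integral_smul_measure, ← integral_Ioc_eq_integral_Ioo,
    ← integral_of_le hab, Real.volume_Ioo, ENNReal.toReal_inv,
    ENNReal.toReal_ofReal (sub_nonneg.2 hab)]

/-- The Peano kernel of Montgomery's identity on `[a, b]` with node `x`: the derivative `f'`
integrated against it measures the deviation of `f x` from the mean of `f`. It is extended beyond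
`[a, b]` by the same formulas. -/
noncomputable def montgomeryKernel (a b x t : ℝ) : ℝ :=
  if t ≤ x then t - a else t - b

theorem measurable_montgomeryKernel : Measurable (montgomeryKernel a b x) :=
  Measurable.ite measurableSet_Iic (by fun_prop) (by fun_prop)

theorem montgomeryKernel_mem_Icc {t : ℝ} (hx : x ∈ Icc a b) (ht : t ∈ Ioo a b) :
    montgomeryKernel a b x t ∈ Icc (x - b) (x - a) := by
  obtain ⟨hax, hxb⟩ := hx
  obtain ⟨hat, htb⟩ := ht
  unfold montgomeryKernel
  split_ifs with htx <;> constructor <;> linarith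

theorem memLp_montgomeryKernel (hx : x ∈ Icc a b) :
    MemLp (montgomeryKernel a b x) 2 (volume[|Ioo a b]) :=
  memLp_of_bounded
    ((ae_cond_mem measurableSet_Ioo).mono fun _ ht ↦ montgomeryKernel_mem_Icc hx ht)
    measurable_montgomeryKernel.aestronglyMeasurable 2

theorem integral_comp_montgomeryKernel_prod {F : ℝ → ℝ → E} (hx : x ∈ Icc a b)
    (hleft : IntervalIntegrable (fun t ↦ F (t - a) t) volume a x)
    (hright : IntervalIntegrable (fun t ↦ F (t - b) t) volume x b) :
    ∫ t in a..b, F (montgomeryKernel a b x t) t =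
      (∫ t in a..x, F (t - a) t) + ∫ t in x..b, F (t - b) t := by
  have eq_left : EqOn (fun t ↦ F (t - a) t) (fun t ↦ F (montgomeryKernel a b x t) t)
      (uIoo a x) := fun t ht ↦ by
    rw [uIoo_of_le hx.1] at ht
    simp only [montgomeryKernel, if_pos ht.2.le]
  have eq_right : EqOn (fun t ↦ F (t - b) t) (fun t ↦ F (montgomeryKernel a b x t) t)
      (uIoo x b) := fun t ht ↦ by
    rw [uIoo_of_le hx.2] at ht
    simp only [montgomeryKernel, if_neg ht.1.not_ge]
  rw [← integral_add_adjacent_intervals (hleft.congr_uIoo eq_left) (hright.congr_uIoo eq_right),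
    integral_congr_uIoo eq_left, integral_congr_uIoo eq_right]

theorem integral_comp_montgomeryKernel {g : ℝ → E} (hx : x ∈ Icc a b)
    (hg : IntervalIntegrable g volume (x - b) (x - a)) :
    ∫ t in a..b, g (montgomeryKernel a b x t) = ∫ s in (x - b)..(x - a), g s := by
  have zero_mem : (0 : ℝ) ∈ uIcc (x - b) (x - a) :=
    Icc_subset_uIcc ⟨sub_nonpos.2 hx.2, sub_nonneg.2 hx.1⟩
  have hneg : IntervalIntegrable g volume (x - b) 0 :=
    hg.mono_set (uIcc_subset_uIcc left_mem_uIcc zero_mem)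
  have hpos : IntervalIntegrable g volume 0 (x - a) :=
    hg.mono_set (uIcc_subset_uIcc zero_mem right_mem_uIcc)
  rw [integral_comp_montgomeryKernel_prod (F := fun s _ ↦ g s) hx
      (by simpa using hpos.comp_sub_right a) (by simpa using hneg.comp_sub_right b),
    intervalIntegral.integral_comp_sub_right, intervalIntegral.integral_comp_sub_right,
    sub_self, sub_self, add_comm, integral_add_adjacent_intervals hneg hpos]

theorem integral_montgomeryKernel_cond (hab : a < b) (hx : x ∈ Icc a b) :
    ∫ t, montgomeryKernel a b x t ∂volume[|Ioo a b] = x - (a + b) / 2 := by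
  have hlen : b - a ≠ 0 := sub_ne_zero.2 hab.ne'
  rw [integral_cond_Ioo hab.le, integral_comp_montgomeryKernel (g := fun s ↦ s) hx
    (continuous_id.intervalIntegrable _ _), integral_id, smul_eq_mul]
  field_simp
  ring

theorem variance_montgomeryKernel_cond (hab : a < b) (hx : x ∈ Icc a b) :
    Var[montgomeryKernel a b x; volume[|Ioo a b]] = (b - a) ^ 2 / 12 := by
  have := isProbabilityMeasure_cond_Ioo hab
  have hlen : b - a ≠ 0 := sub_ne_zero.2 hab.ne'
  have second_moment : ∫ t, montgomeryKernel a b x t ^ 2 ∂volume[|Ioo a b] =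
      (b - a)⁻¹ * (((x - a) ^ 3 - (x - b) ^ 3) / 3) := by
    rw [integral_cond_Ioo hab.le, integral_comp_montgomeryKernel (g := fun s ↦ s ^ 2) hx
      ((continuous_pow 2).intervalIntegrable _ _), integral_pow, smul_eq_mul]
    norm_num
  rw [variance_eq_sub (memLp_montgomeryKernel hx), integral_montgomeryKernel_cond hab hx]
  simp only [Pi.pow_apply]
  rw [second_moment]
  field_simp
  ring

theorem integral_sub_smul_rightDeriv [CompleteSpace E] {f f' : ℝ → E} (hab : a ≤ b)
    (hcont : ContinuousOn f (Icc a b))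
    (hderiv : ∀ t ∈ Ioo a b, HasDerivWithinAt f (f' t) (Ioi t) t)
    (hint : IntervalIntegrable f' volume a b) (c : ℝ) :
    ∫ t in a..b, (t - c) • f' t = (b - c) • f b - (a - c) • f a - ∫ t in a..b, f t := by
  rw [← uIcc_of_le hab] at hcont
  simpa only [one_smul] using integral_smul_deriv_eq_deriv_smul_of_hasDeriv_right
    (u := fun t ↦ t - c) (u' := fun _ ↦ 1) (by fun_prop) hcont
    (fun t _ ↦ ((hasDerivAt_id t).sub_const c).hasDerivWithinAt)
    (by simpa only [min_eq_left hab, max_eq_right hab] using hderiv)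
    intervalIntegrable_const hint

theorem integral_montgomeryKernel_smul_rightDeriv [CompleteSpace E] {f f' : ℝ → E}
    (hx : x ∈ Icc a b) (hcont : ContinuousOn f (Icc a b))
    (hderiv : ∀ t ∈ Ioo a b, HasDerivWithinAt f (f' t) (Ioi t) t)
    (hint : IntervalIntegrable f' volume a b) :
    ∫ t in a..b, montgomeryKernel a b x t • f' t = (b - a) • f x - ∫ t in a..b, f t := by
  obtain ⟨hax, hxb⟩ := hx
  have hfint : IntervalIntegrable f volume a b :=
    ContinuousOn.intervalIntegrable_of_Icc (hax.trans hxb) hcont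
  have subset_left : uIcc a x ⊆ uIcc a b :=
    uIcc_subset_uIcc left_mem_uIcc (Icc_subset_uIcc ⟨hax, hxb⟩)
  have subset_right : uIcc x b ⊆ uIcc a b :=
    uIcc_subset_uIcc (Icc_subset_uIcc ⟨hax, hxb⟩) right_mem_uIcc
  have hint_left := hint.mono_set subset_left
  have hint_right := hint.mono_set subset_right
  rw [integral_comp_montgomeryKernel_prod (F := fun s t ↦ s • f' t) ⟨hax, hxb⟩
      (hint_left.continuousOn_smul (by fun_prop)) (hint_right.continuousOn_smul (by fun_prop)),
    integral_sub_smul_rightDeriv hax (hcont.mono (Icc_subset_Icc_right hxb))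
      (fun t ht ↦ hderiv t (Ioo_subset_Ioo_right hxb ht)) hint_left,
    integral_sub_smul_rightDeriv hxb (hcont.mono (Icc_subset_Icc_left hax))
      (fun t ht ↦ hderiv t (Ioo_subset_Ioo_left hax ht)) hint_right,
    ← integral_add_adjacent_intervals (hfint.mono_set subset_left) (hfint.mono_set subset_right)]
  module

theorem integral_rightDeriv_cond [CompleteSpace E] {f f' : ℝ → E} (hab : a ≤ b)
    (hcont : ContinuousOn f (Icc a b))
    (hderiv : ∀ t ∈ Ioo a b, HasDerivWithinAt f (f' t) (Ioi t) t)
    (hint : IntervalIntegrable f' volume a b) :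
    ∫ t, f' t ∂volume[|Ioo a b] = (b - a)⁻¹ • (f b - f a) := by
  rw [integral_cond_Ioo hab, integral_eq_sub_of_hasDeriv_right_of_le hab hcont hderiv hint]

theorem aestronglyMeasurable_rightDeriv_cond [CompleteSpace E] {f f' : ℝ → E}
    (hderiv : ∀ t ∈ Ioo a b, HasDerivWithinAt f (f' t) (Ioi t) t) :
    AEStronglyMeasurable f' (volume[|Ioo a b]) :=
  (aestronglyMeasurable_derivWithin_Ioi f _).congr <|
    (ae_cond_mem measurableSet_Ioo).mono fun t ht ↦
      (hderiv t ht).derivWithin (uniqueDiffWithinAt_Ioi t)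

variable {f f' : ℝ → ℝ}

theorem covariance_montgomeryKernel_rightDeriv (hab : a < b) (hx : x ∈ Icc a b)
    (hcont : ContinuousOn f (Icc a b))
    (hderiv : ∀ t ∈ Ioo a b, HasDerivWithinAt f (f' t) (Ioi t) t)
    (hL2 : MemLp f' 2 (volume[|Ioo a b])) :
    cov[montgomeryKernel a b x, f'; volume[|Ioo a b]] =
      f x - (x - (a + b) / 2) * ((f b - f a) / (b - a)) - 1 / (b - a) * ∫ t in a..b, f t := by
  have := isProbabilityMeasure_cond_Ioo hab
  have hlen : b - a ≠ 0 := sub_ne_zero.2 hab.ne'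
  have hint := (integrable_cond_Ioo_iff hab).1 (hL2.integrable one_le_two)
  have montgomery : ∫ t, montgomeryKernel a b x t * f' t ∂volume[|Ioo a b] =
      (b - a)⁻¹ * ((b - a) * f x - ∫ t in a..b, f t) := by
    rw [integral_cond_Ioo hab.le]
    exact congrArg _ (integral_montgomeryKernel_smul_rightDeriv hx hcont hderiv hint)
  rw [covariance_eq_sub (memLp_montgomeryKernel hx) hL2, integral_montgomeryKernel_cond hab hx,
    integral_rightDeriv_cond hab.le hcont hderiv hint]
  simp only [Pi.mul_apply]
  rw [montgomery, smul_eq_mul]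
  field_simp
  ring

theorem variance_rightDeriv (hab : a < b) (hcont : ContinuousOn f (Icc a b))
    (hderiv : ∀ t ∈ Ioo a b, HasDerivWithinAt f (f' t) (Ioi t) t)
    (hL2 : MemLp f' 2 (volume[|Ioo a b])) :
    Var[f'; volume[|Ioo a b]] =
      1 / (b - a) * (∫ t in a..b, f' t ^ 2) - ((f b - f a) / (b - a)) ^ 2 := by
  have := isProbabilityMeasure_cond_Ioo hab
  have hint := (integrable_cond_Ioo_iff hab).1 (hL2.integrable one_le_two)
  rw [variance_eq_sub hL2, integral_rightDeriv_cond hab.le hcont hderiv hint,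
    integral_cond_Ioo hab.le]
  simp only [Pi.pow_apply, smul_eq_mul, one_div, inv_mul_eq_div]

theorem abs_sub_average_le_sqrt_variance (hab : a < b) (hx : x ∈ Icc a b)
    (hcont : ContinuousOn f (Icc a b))
    (hderiv : ∀ t ∈ Ioo a b, HasDerivWithinAt f (f' t) (Ioi t) t)
    (hL2 : MemLp f' 2 (volume[|Ioo a b])) :
    |f x - (x - (a + b) / 2) * ((f b - f a) / (b - a)) - 1 / (b - a) * ∫ t in a..b, f t| ≤
      (b - a) / (2 * √3) * √(Var[f'; volume[|Ioo a b]]) := by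
  have := isProbabilityMeasure_cond_Ioo hab
  have hlen : 0 ≤ b - a := sub_nonneg.2 hab.le
  rw [← covariance_montgomeryKernel_rightDeriv hab hx hcont hderiv hL2]
  refine abs_le_of_sq_le_sq ?_
    (mul_nonneg (div_nonneg hlen (by positivity)) (Real.sqrt_nonneg _))
  calc cov[montgomeryKernel a b x, f'; volume[|Ioo a b]] ^ 2
      ≤ Var[montgomeryKernel a b x; volume[|Ioo a b]] * Var[f'; volume[|Ioo a b]] :=
        sq_covariance_le_variance_mul_variance (memLp_montgomeryKernel hx) hL2
    _ = ((b - a) / (2 * √3) * √(Var[f'; volume[|Ioo a b]])) ^ 2 := by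
        rw [variance_montgomeryKernel_cond hab hx, mul_pow, Real.sq_sqrt (variance_nonneg _ _),
          div_pow, mul_pow, Real.sq_sqrt zero_le_three]
        norm_num

theorem midpoint_corollary_general {φ Φ : ℝ} (hab : a < b) (hx : x ∈ Icc a b)
    (hcont : ContinuousOn f (Icc a b))
    (hderiv : ∀ t ∈ Ioo a b, HasDerivWithinAt f (f' t) (Ioi t) t)
    (hbound : ∀ t ∈ Ioo a b, φ ≤ f' t ∧ f' t ≤ Φ) :
    |f x - (x - (a + b) / 2) * ((f b - f a) / (b - a)) - 1 / (b - a) * ∫ t in a..b, f t| ≤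
        (b - a) / (2 * √3) *
          √(1 / (b - a) * (∫ t in a..b, f' t ^ 2) - ((f b - f a) / (b - a)) ^ 2) ∧
      (b - a) / (2 * √3) *
          √(1 / (b - a) * (∫ t in a..b, f' t ^ 2) - ((f b - f a) / (b - a)) ^ 2) ≤
        (b - a) * (Φ - φ) / (4 * √3) := by
  have := isProbabilityMeasure_cond_Ioo hab
  have hmeas := aestronglyMeasurable_rightDeriv_cond hderiv
  have hmem : ∀ᵐ t ∂volume[|Ioo a b], f' t ∈ Icc φ Φ :=
    (ae_cond_mem measurableSet_Ioo).mono hbound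
  have hL2 : MemLp f' 2 (volume[|Ioo a b]) := memLp_of_bounded hmem hmeas 2
  rw [← variance_rightDeriv hab hcont hderiv hL2]
  refine ⟨abs_sub_average_le_sqrt_variance hab hx hcont hderiv hL2, ?_⟩
  obtain ⟨t, ht⟩ := hmem.exists
  have popoviciu : √(Var[f'; volume[|Ioo a b]]) ≤ (Φ - φ) / 2 :=
    Real.sqrt_le_iff.2
      ⟨by linarith [ht.1, ht.2], variance_le_sq_of_bounded hmem hmeas.aemeasurable⟩
  calc (b - a) / (2 * √3) * √(Var[f'; volume[|Ioo a b]])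
      ≤ (b - a) / (2 * √3) * ((Φ - φ) / 2) :=
        mul_le_mul_of_nonneg_left popoviciu (div_nonneg (sub_nonneg.2 hab.le) (by positivity))
    _ = (b - a) * (Φ - φ) / (4 * √3) := by field_simp; ring

end Ostrowski

/-- **Midpoint specialization of the α = 1 corollary.** For `f` differentiable on the
interior of `I`, `a, b ∈ I°`, `a < b`, `f' ∈ L₂[a,b]`, `f'` bounded on `(a,b)` by
`φ ≤ f' ≤ Φ`:
`|f((a+b)/2) − (1/(b−a))∫_a^b f|
  ≤ ((b−a)/(2√3)) ((1/(b−a))‖f'‖₂² − ((f(b)−f(a))/(b−a))²)^{1/2}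
  ≤ (b−a)(Φ−φ)/(4√3)`. -/
theorem midpoint_corollary (I : Set ℝ) (hIconn : I.OrdConnected)
    (a b φ Φ : ℝ) (ha : a ∈ interior I) (hb : b ∈ interior I) (hab : a < b)
    (f f' : ℝ → ℝ) (hderiv : ∀ y ∈ interior I, HasDerivAt f (f' y) y)
    (hL2 : IntervalIntegrable (fun t => (f' t) ^ 2) volume a b)
    (hbound : ∀ x ∈ Ioo a b, φ ≤ f' x ∧ f' x ≤ Φ) :
    |f ((a + b) / 2) - (1 / (b - a)) * ∫ t in a..b, f t| ≤
        ((b - a) / (2 * Real.sqrt 3)) *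
          Real.sqrt ((1 / (b - a)) * (∫ t in a..b, (f' t) ^ 2) -
            ((f b - f a) / (b - a)) ^ 2) ∧
      ((b - a) / (2 * Real.sqrt 3)) *
          Real.sqrt ((1 / (b - a)) * (∫ t in a..b, (f' t) ^ 2) -
            ((f b - f a) / (b - a)) ^ 2) ≤
        (b - a) * (Φ - φ) / (4 * Real.sqrt 3) := by
  have hsub : Icc a b ⊆ interior I := hIconn.interior.out ha hb
  simpa only [sub_self, zero_mul, sub_zero] using
    midpoint_corollary_general (x := (a + b) / 2) hab ⟨by linarith, by linarith⟩
      (fun y hy ↦ (hderiv y (hsub hy)).continuousAt.continuousWithinAt)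
      (fun y hy ↦ (hderiv y (hsub (Ioo_subset_Icc_self hy))).hasDerivWithinAt) hbound
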